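/- Alice's use of the detection loophole is irrelevant: suppose additionally that J is a finite nonempty type of Alice's strategies with a probability distribution q : J → ℝ (q_j ≥ 0, Σ_j q_j = 1), Alice's detection efficiencies η'_j(a) ∈ [0,1] satisfy Σ_j q_j η'_j(a) > 0 for every a ∈ 𝒜, and for each j, a there is a probability distribution P_j(·|a) on M. Define P'(A|a) := (Σ_j q_j η'_j(a) P_j(A|a)) / (Σ_j q_j η'_j(a)). Then (i) P'(·|a) is a probability distribution on M for every a, and (ii) for all B, a, b for which the denominators are strictly positive, (Σ_{i,j,A} p_i q_j η_i(A,b) η'_j(a) P_i(B|A,b) P_j(A|a)) / (Σ_{i,j,A} p_i q_j η_i(A,b) η'_j(a) P_j(A|a)) = (Σ_{i,A} p_i η_i(A,b) P_i(B|A,b) P'(A|a)) / (Σ_{i,A} p_i η_i(A,b) P'(A|a)). -/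

import Mathlib

/-- Alice's use of the detection loophole is irrelevant.
Given Bob's DL strategy (distribution `p` on strategies `I`, response
distributions `Pi`, efficiencies `η`) and Alice's DL strategy (distribution `q`
on `J`, efficiencies `η'` with positive total click probability, message
distributions `Pj`), the effective message distribution
`P' a A = (∑ j, q j * η' j a * Pj j a A) / (∑ j, q j * η' j a)` is a
probability distribution, and the full DL statistics (with Alice's losses)
coincide with the DL statistics where Alice simply prepares `P'` without
resorting to the detection loophole. -/
theorem alice_detection_loophole_irrelevant
    {𝒜 ℬ M 𝒪 I J : Type*}
    [Fintype 𝒜] [Fintype ℬ] [Fintype M] [Fintype 𝒪] [Fintype I] [Fintype J]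
    [Nonempty 𝒜] [Nonempty ℬ] [Nonempty M] [Nonempty 𝒪] [Nonempty I] [Nonempty J]
    -- Bob's strategy distribution
    (p : I → ℝ) (hp : ∀ i, 0 ≤ p i) (hp1 : ∑ i, p i = 1)
    -- Bob's response distributions Pᵢ(B|A,b)
    (Pi : I → M → ℬ → 𝒪 → ℝ)
    (hPi : ∀ i A b B, 0 ≤ Pi i A b B) (hPi1 : ∀ i A b, ∑ B, Pi i A b B = 1)
    -- Bob's detection efficiencies ηᵢ(A,b) ∈ [0,1]
    (η : I → M → ℬ → ℝ) (hη : ∀ i A b, 0 ≤ η i A b ∧ η i A b ≤ 1)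
    -- Alice's strategy distribution
    (q : J → ℝ) (hq : ∀ j, 0 ≤ q j) (hq1 : ∑ j, q j = 1)
    -- Alice's detection efficiencies η'ⱼ(a) ∈ [0,1] with positive total click probability
    (η' : J → 𝒜 → ℝ) (hη' : ∀ j a, 0 ≤ η' j a ∧ η' j a ≤ 1)
    (hclick : ∀ a, 0 < ∑ j, q j * η' j a)
    -- Alice's message distributions Pⱼ(A|a)
    (Pj : J → 𝒜 → M → ℝ)
    (hPj : ∀ j a A, 0 ≤ Pj j a A) (hPj1 : ∀ j a, ∑ A, Pj j a A = 1)
    -- the effective message distribution P'(A|a)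
    (P' : 𝒜 → M → ℝ)
    (hP' : ∀ a A, P' a A =
      (∑ j, q j * η' j a * Pj j a A) / (∑ j, q j * η' j a)) :
    -- (i) P'(·|a) is a probability distribution on M
    (∀ a, (∀ A, 0 ≤ P' a A) ∧ ∑ A, P' a A = 1) ∧
    -- (ii) the full DL statistics equal the DL statistics with Alice preparing P'
    (∀ (B : 𝒪) (a : 𝒜) (b : ℬ),
      0 < (∑ i, ∑ j, ∑ A, p i * q j * η i A b * η' j a * Pj j a A) →
      0 < (∑ i, ∑ A, p i * η i A b * P' a A) →
      (∑ i, ∑ j, ∑ A, p i * q j * η i A b * η' j a * Pi i A b B * Pj j a A) /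
        (∑ i, ∑ j, ∑ A, p i * q j * η i A b * η' j a * Pj j a A)
      =
      (∑ i, ∑ A, p i * η i A b * Pi i A b B * P' a A) /
        (∑ i, ∑ A, p i * η i A b * P' a A)) := by
  have key : ∀ a A, (∑ j, q j * η' j a * Pj j a A) = (∑ j, q j * η' j a) * P' a A := by
    intro a A
    rw [hP', mul_div_cancel₀ _ (hclick a).ne']
  refine ⟨fun a => ⟨fun A => ?_, ?_⟩, fun B a b _ _ => ?_⟩
  · rw [hP']
    exact div_nonneg (Finset.sum_nonneg fun j _ =>
      mul_nonneg (mul_nonneg (hq j) (hη' j a).1) (hPj j a A)) (hclick a).le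
  · have h : (∑ A, ∑ j, q j * η' j a * Pj j a A) = ∑ j, q j * η' j a := by
      rw [Finset.sum_comm]
      refine Finset.sum_congr rfl fun j _ => ?_
      rw [← Finset.mul_sum, hPj1, mul_one]
    simp_rw [hP']
    rw [← Finset.sum_div, h, div_self (hclick a).ne']
  · have gen : ∀ f : I → M → ℝ,
        (∑ i, ∑ j, ∑ A, f i A * (q j * η' j a * Pj j a A))
          = (∑ j, q j * η' j a) * ∑ i, ∑ A, f i A * P' a A := by
      intro f
      rw [Finset.mul_sum]
      refine Finset.sum_congr rfl fun i _ => ?_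
      rw [Finset.sum_comm, Finset.mul_sum]
      refine Finset.sum_congr rfl fun A _ => ?_
      rw [← Finset.mul_sum, key]
      ring
    have h1 := gen fun i A => p i * η i A b * Pi i A b B
    have h2 := gen fun i A => p i * η i A b
    refine Eq.trans ?_ (mul_div_mul_left _ _ (hclick a).ne')
    rw [← h1, ← h2]
    congr 1 <;>
    exact Finset.sum_congr rfl fun i _ => Finset.sum_congr rfl fun j _ =>
      Finset.sum_congr rfl fun A _ => by ring
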